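/- For every permutation w of {1,…,n} and every δ ∈ GPDs(w), the degree in the variable A of the weight wt(δ) equals n² minus the number of blank tiles of δ, and this degree is at most n² − ℓ(w), where ℓ(w) is the number of inversions of w. Equality holds if and only if δ is bumpless-reduced, i.e., δ has no bump tiles and no two pipes of δ cross each other at more than one tile. -/

import Mathlib

open scoped Classical

namespace GPDpaper

/-- Raw data of a pipe-filling of the `n × n` grid: `d.1 i j` is the (optional) pipe label on
the vertical edge at row `i`, West of column `j` (so `d.1 i 0` is on the West boundary and
`d.1 i (Fin.last n)` on the East boundary); `d.2 i j` is the label on the horizontal edge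
North of row `i` in column `j` (so `d.2 0 j` is on the North boundary and
`d.2 (Fin.last n) j` on the South boundary).  Rows are numbered from the top. -/
abbrev Pipes (n : ℕ) :=
  (Fin n → Fin (n+1) → Option (Fin n)) × (Fin (n+1) → Fin n → Option (Fin n))

variable {n : ℕ}

/-- Label on the West edge of square `(i,j)`. -/
def We (d : Pipes n) (i j : Fin n) : Option (Fin n) := d.1 i j.castSucc
/-- Label on the East edge of square `(i,j)`. -/
def Ea (d : Pipes n) (i j : Fin n) : Option (Fin n) := d.1 i j.succ
/-- Label on the North edge of square `(i,j)`. -/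
def No (d : Pipes n) (i j : Fin n) : Option (Fin n) := d.2 i.castSucc j
/-- Label on the South edge of square `(i,j)`. -/
def So (d : Pipes n) (i j : Fin n) : Option (Fin n) := d.2 i.succ j

/-- The local condition making `d` a generic pipe dream: at each square, the pair of labels
leaving through the East and North edges is either `(W,S)` (cross/horizontal/vertical/blank
tile) or `(S,W)` (bump/elbow/blank tile); moreover two edges of the same square never carry
the same pipe label. -/
def IsValid (d : Pipes n) : Prop :=
  ∀ i j : Fin n,
    ((Ea d i j, No d i j) = (We d i j, So d i j) ∨
     (Ea d i j, No d i j) = (So d i j, We d i j)) ∧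
    (We d i j = So d i j → We d i j = none)

/-- The seven generic pipe dream tiles. -/
inductive Tile where
  | cross | bump | nw | se | horiz | vert | blank
deriving DecidableEq

/-- The tile of a pipe-filling at square `(i,j)`. -/
def tile (d : Pipes n) (i j : Fin n) : Tile :=
  match We d i j, So d i j with
  | some a, some _ => if Ea d i j = some a then .cross else .bump
  | some _, none => if No d i j = none then .horiz else .nw
  | none, some _ => if No d i j = none then .se else .vert
  | none, none => .blank

/-- `d` is a generic pipe dream for the permutation `w`: it is locally valid, the pipe
entering the West boundary in row `i` is labelled `i`, no pipes meet the East and South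
boundaries, and the pipe exiting the North boundary in column `j` is labelled `w⁻¹(j)`. -/
def IsGPDof (w : Equiv.Perm (Fin n)) (d : Pipes n) : Prop :=
  IsValid d ∧
  (∀ i : Fin n, d.1 i 0 = some i) ∧
  (∀ i : Fin n, d.1 i (Fin.last n) = none) ∧
  (∀ j : Fin n, d.2 (Fin.last n) j = none) ∧
  (∀ j : Fin n, d.2 0 j = some (w.symm j))

/-- Number of tiles of `d` of a given type. -/
noncomputable def tileCount (d : Pipes n) (t : Tile) : ℕ :=
  (Finset.univ.filter (fun p : Fin n × Fin n => tile d p.1 p.2 = t)).card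

/-- The pipes labelled `p` and `q` cross at the tile `(i,j)`. -/
def CrossesAt (d : Pipes n) (p q : Fin n) (i j : Fin n) : Prop :=
  tile d i j = .cross ∧
  ((We d i j = some p ∧ So d i j = some q) ∨ (We d i j = some q ∧ So d i j = some p))

/-- The number of tiles at which the pipes labelled `p` and `q` cross. -/
noncomputable def crossCount (d : Pipes n) (p q : Fin n) : ℕ :=
  (Finset.univ.filter (fun ij : Fin n × Fin n => CrossesAt d p q ij.1 ij.2)).card

/-- No two pipes of `d` cross each other at more than one tile. -/
def NoDoubleCross (d : Pipes n) : Prop := ∀ p q : Fin n, crossCount d p q ≤ 1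

/-- Number of inversions (Coxeter length) of a permutation. -/
def invCount (w : Equiv.Perm (Fin n)) : ℕ :=
  (Finset.univ.filter (fun p : Fin n × Fin n => p.1 < p.2 ∧ w p.2 < w p.1)).card

/-- Classic pipe dream (in 1-indexed terms: crosses and bumps for `i+j ≤ n`, NW-elbows on the
antidiagonal `i+j = n+1`, blanks below, and no two pipes crossing twice). -/
def IsClassic (d : Pipes n) : Prop :=
  (∀ i j : Fin n, (i : ℕ) + (j : ℕ) + 2 ≤ n → tile d i j = .cross ∨ tile d i j = .bump) ∧
  (∀ i j : Fin n, (i : ℕ) + (j : ℕ) + 2 = n + 1 → tile d i j = .nw) ∧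
  (∀ i j : Fin n, (i : ℕ) + (j : ℕ) + 2 > n + 1 → tile d i j = .blank) ∧
  NoDoubleCross d

/-- Bumpless-reduced: no bump tiles and no two pipes crossing twice. -/
def IsBumplessReduced (d : Pipes n) : Prop :=
  (∀ i j : Fin n, tile d i j ≠ .bump) ∧ NoDoubleCross d

end GPDpaper

namespace GPDpaper

/-- Variables `x₁,…,xₙ, y₁,…,yₙ, A, B`. -/
inductive Var (n : ℕ) where
  | x (i : Fin n) | y (j : Fin n) | A | B

variable {n : ℕ}

/-- The weight of a generic pipe dream, in `ℤ[x₁,…,xₙ,y₁,…,yₙ,A,B]`. -/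
noncomputable def wt (d : Pipes n) : MvPolynomial (Var n) ℤ :=
  ∏ i : Fin n, ∏ j : Fin n,
    match tile d i j with
    | .cross | .horiz | .vert =>
        MvPolynomial.X Var.A + MvPolynomial.X (Var.x i) - MvPolynomial.X (Var.y j)
    | .blank =>
        MvPolynomial.X Var.B - MvPolynomial.X (Var.x i) + MvPolynomial.X (Var.y j)
    | _ => MvPolynomial.X Var.A + MvPolynomial.X Var.B

/-- The generic pipe dream polynomial `G_w`. -/
noncomputable def G (w : Equiv.Perm (Fin n)) : MvPolynomial (Var n) ℤ :=
  ∑ d ∈ Finset.univ.filter (fun d : Pipes n => IsGPDof w d), wt d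

/-! Each tile preserves the multiset of labels from its West and South edges to its North and East
edges, so any edge weight satisfies a discrete Green formula: the sum of its tile-wise defects is a
boundary term. Two choices of weight carry the argument.

* Every pipe makes North or East steps only, hence the pipe from row `i` to column `j` (1-indexed)
  has `i + j - 1` segments, and all pipes together have `n²`. A cross or bump has two segments, a
  blank none and every other tile one, so there are as many blanks as crosses and bumps together.
* The indicator of a pipe `p` is the gradient of a height function telling on which side of `p` a
  vertex lies. Weighting the edges of `q` by the height of `p` counts the signed crossings of `p`
  and `q`; the boundary term is `±1` for an inversion and `0` otherwise. Hence two pipes cross as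
  often as `w` inverts them, plus an even number.

So the number of blanks is `ℓ(w)` plus the number of bumps plus twice the number of crossings at
which the larger label comes from the West, while every nonblank tile contributes `1` to the degree
in `A`. -/

section GridSums

variable {M : Type*} [AddCommGroup M] {m : ℕ}

lemma sum_castSucc_sub_succ (f : Fin (m + 1) → M) :
    ∑ j : Fin m, (f j.castSucc - f j.succ) = f 0 - f (Fin.last m) := by
  rw [Finset.sum_sub_distrib, sub_eq_sub_iff_add_eq_add, ← Fin.sum_univ_castSucc,
    Fin.sum_univ_succ]

lemma sum_grid_defect_eq_boundary (h : Fin m → Fin (n + 1) → M) (v : Fin (m + 1) → Fin n → M) :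
    ∑ i, ∑ j, (h i j.castSucc + v i.succ j - (v i.castSucc j + h i j.succ)) =
      (∑ i, h i 0 + ∑ j, v (Fin.last m) j) - (∑ j, v 0 j + ∑ i, h i (Fin.last n)) := by
  calc ∑ i, ∑ j, (h i j.castSucc + v i.succ j - (v i.castSucc j + h i j.succ))
      = ∑ i : Fin m, ∑ j : Fin n,
          ((h i j.castSucc - h i j.succ) - (v i.castSucc j - v i.succ j)) :=
        Finset.sum_congr rfl fun i _ => Finset.sum_congr rfl fun j _ => by abel
    _ = ∑ i : Fin m, ∑ j : Fin n, (h i j.castSucc - h i j.succ) -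
          ∑ j : Fin n, ∑ i : Fin m, (v i.castSucc j - v i.succ j) := by
        rw [Finset.sum_comm (f := fun (j : Fin n) (i : Fin m) => v i.castSucc j - v i.succ j)]
        simp only [Finset.sum_sub_distrib]
    _ = ∑ i, (h i 0 - h i (Fin.last n)) - ∑ j, (v 0 j - v (Fin.last m) j) := by
        simp only [sum_castSucc_sub_succ (h _), fun j => sum_castSucc_sub_succ fun i => v i j]
    _ = _ := by
        simp only [Finset.sum_sub_distrib]
        abel

lemma partialSum_ite_eq {N : Type*} [AddMonoid N] (a : Fin m) (c : N) (i : Fin (m + 1)) :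
    Fin.partialSum (fun k => if k = a then c else 0) i = if a.castSucc < i then c else 0 := by
  induction i using Fin.induction with
  | zero => simp
  | succ i ih =>
    rw [Fin.partialSum_succ, ih]
    rcases lt_trichotomy a i with h | rfl | h
    · simp [h, h.ne', Fin.castSucc_lt_succ_iff, h.le]
    · simp
    · simp [h.not_gt, h.ne, Fin.castSucc_lt_succ_iff, h]

lemma sum_fin_two_mul_add_one (m : ℕ) : ∑ i : Fin m, (2 * (i : ℤ) + 1) = (m : ℤ) ^ 2 := by
  induction m with
  | zero => simp
  | succ m ih =>
    simp only [Fin.sum_univ_castSucc, Fin.val_castSucc, ih, Fin.val_last]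
    push_cast
    ring

end GridSums

section Segments

lemma IsValid.map_We_add_map_So {M : Type*} [AddCommMagma M] {d : Pipes n} (hd : IsValid d)
    (f : Option (Fin n) → M) (i j : Fin n) :
    f (We d i j) + f (So d i j) = f (No d i j) + f (Ea d i j) := by
  rcases (hd i j).1 with h | h <;> rw [Prod.mk.injEq] at h <;> rw [h.1, h.2]
  exact add_comm _ _

/-- The number of pipes (`0` or `1`) through an edge with label `x`, as an integer because it enters
signed sums. -/
def occupancy (x : Option (Fin n)) : ℤ := if x = none then 0 else 1

lemma occupancy_add_occupancy_add_blank (d : Pipes n) (i j : Fin n) :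
    occupancy (We d i j) + occupancy (So d i j) + (if tile d i j = .blank then 1 else 0) =
      1 + (if tile d i j = .cross then 1 else 0) + (if tile d i j = .bump then 1 else 0) := by
  unfold tile
  rcases We d i j with _ | a <;> rcases So d i j with _ | b <;> simp only [occupancy] <;>
    split_ifs <;> simp_all

lemma IsGPDof.sum_occupancy {w : Equiv.Perm (Fin n)} {d : Pipes n} (hd : IsGPDof w d) :
    ∑ i, ∑ j, (occupancy (We d i j) + occupancy (So d i j)) = (n : ℤ) ^ 2 := by
  obtain ⟨hvalid, hwest, heast, hsouth, hnorth⟩ := hd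
  -- These edge weights drop by one along each step of a pipe.
  have green := sum_grid_defect_eq_boundary
    (fun i j => ((i : ℤ) - (j : ℤ)) * occupancy (d.1 i j))
    (fun i j => ((i : ℤ) - (j : ℤ) - 1) * occupancy (d.2 i j))
  have defect (i j : Fin n) :
      ((i : ℤ) - (j.castSucc : ℕ)) * occupancy (d.1 i j.castSucc) +
        ((i.succ : ℕ) - (j : ℤ) - 1) * occupancy (d.2 i.succ j) -
        (((i.castSucc : ℕ) - (j : ℤ) - 1) * occupancy (d.2 i.castSucc j) +
          ((i : ℤ) - (j.succ : ℕ)) * occupancy (d.1 i j.succ)) =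
      occupancy (We d i j) + occupancy (So d i j) := by
    have conserved := hvalid.map_We_add_map_So occupancy i j
    simp only [We, So, No, Ea, Fin.val_castSucc, Fin.val_succ] at conserved ⊢
    push_cast
    linear_combination ((i : ℤ) - j - 1) * conserved
  simp only [defect, hwest, heast, hsouth, hnorth] at green
  rw [green, ← sum_fin_two_mul_add_one n]
  simp only [occupancy, reduceCtorEq, if_true, if_false, mul_zero, mul_one, Finset.sum_const_zero,
    add_zero, ← Finset.sum_sub_distrib, Fin.val_zero, Nat.cast_zero]
  exact Finset.sum_congr rfl fun i _ => by ring

lemma IsGPDof.tileCount_blank {w : Equiv.Perm (Fin n)} {d : Pipes n} (hd : IsGPDof w d) :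
    tileCount d .blank = tileCount d .cross + tileCount d .bump := by
  have cast_tileCount (t : Tile) :
      (tileCount d t : ℤ) = ∑ i, ∑ j, if tile d i j = t then 1 else 0 := by
    rw [tileCount, Finset.natCast_card_filter, Fintype.sum_prod_type]
  have sum_tiles : ∑ i, ∑ j,
        (occupancy (We d i j) + occupancy (So d i j) + if tile d i j = .blank then 1 else 0) =
      ∑ i, ∑ j, (1 + (if tile d i j = .cross then 1 else 0) +
        if tile d i j = .bump then 1 else 0) := by
    simp only [occupancy_add_occupancy_add_blank]
  have card_grid : ∑ _i : Fin n, ∑ _j : Fin n, (1 : ℤ) = n ^ 2 := by simp [sq]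
  have sum_occupancy := hd.sum_occupancy
  simp only [Finset.sum_add_distrib] at sum_tiles sum_occupancy
  zify
  simp only [cast_tileCount]
  linarith

end Segments

section SignedCrossings

/-- The indicator that an edge with label `x` belongs to the pipe `p`, as an integer because it
enters signed sums. -/
def labelIndicator (p : Fin n) (x : Option (Fin n)) : ℤ := if x = some p then 1 else 0

/-- The height function of the pipe `p`, equal to `1` at the vertices which `p` separates from the
Northwest corner and to `0` at the others. It counts the edges of `p` met on the way from the
Northwest corner South to row `i` and then East to column `j`. -/
def height (d : Pipes n) (p : Fin n) (i j : Fin (n + 1)) : ℤ :=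
  Fin.partialSum (fun k => labelIndicator p (d.1 k 0)) i +
    Fin.partialSum (fun l => labelIndicator p (d.2 i l)) j

lemma height_east (d : Pipes n) (p : Fin n) (i : Fin (n + 1)) (j : Fin n) :
    height d p i j.succ = height d p i j.castSucc + labelIndicator p (d.2 i j) := by
  rw [height, height, Fin.partialSum_succ, add_assoc]

lemma IsValid.height_south {d : Pipes n} (hd : IsValid d) (p i : Fin n) (j : Fin (n + 1)) :
    height d p i.succ j = height d p i.castSucc j + labelIndicator p (d.1 i j) := by
  induction j using Fin.induction with
  | zero => simp [height, Fin.partialSum_succ]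
  | succ j ih =>
    have conserved := hd.map_We_add_map_So (labelIndicator p) i j
    simp only [We, So, No, Ea] at conserved
    rw [height_east, height_east, ih]
    linear_combination conserved

/-- The pipe `p` runs West–East and the pipe `q` South–North through a cross at `(i,j)`. -/
def HorizCrossesAt (d : Pipes n) (p q i j : Fin n) : Prop :=
  tile d i j = .cross ∧ We d i j = some p ∧ So d i j = some q

/-- The number of tiles at which the pipe `p` crosses the pipe `q` with `p` running West–East. -/
noncomputable def horizCrossCount (d : Pipes n) (p q : Fin n) : ℕ :=
  (Finset.univ.filter fun ij : Fin n × Fin n => HorizCrossesAt d p q ij.1 ij.2).card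

lemma horizCrossesAt_iff {d : Pipes n} {p q i j : Fin n} :
    HorizCrossesAt d p q i j ↔ We d i j = some p ∧ So d i j = some q ∧ Ea d i j = some p := by
  have tile_eq_cross_iff (hW : We d i j = some p) (hS : So d i j = some q) :
      tile d i j = .cross ↔ Ea d i j = some p := by
    simp [tile, hW, hS]
  exact ⟨fun ⟨ht, hW, hS⟩ => ⟨hW, hS, (tile_eq_cross_iff hW hS).1 ht⟩,
    fun ⟨hW, hS, hE⟩ => ⟨(tile_eq_cross_iff hW hS).2 hE, hW, hS⟩⟩

lemma IsValid.labelIndicator_curl {d : Pipes n} (hd : IsValid d) {p q : Fin n} (hpq : p ≠ q)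
    (i j : Fin n) :
    labelIndicator p (We d i j) * labelIndicator q (So d i j) -
        labelIndicator p (No d i j) * labelIndicator q (Ea d i j) =
      (if HorizCrossesAt d p q i j then 1 else 0) -
        (if HorizCrossesAt d q p i j then 1 else 0) := by
  simp only [horizCrossesAt_iff, labelIndicator]
  rcases (hd i j).1 with straight | turn
  · obtain ⟨hE, hN⟩ := Prod.mk.inj straight
    rw [hE, hN]
    split_ifs <;> simp_all
  · obtain ⟨hE, hN⟩ := Prod.mk.inj turn
    rw [hE, hN]
    split_ifs <;> grind

lemma IsValid.horizCrossCount_sub_eq_boundary {d : Pipes n} (hd : IsValid d) {p q : Fin n}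
    (hpq : p ≠ q) :
    (horizCrossCount d p q : ℤ) - horizCrossCount d q p =
      (∑ i : Fin n, height d p i.castSucc 0 * labelIndicator q (d.1 i 0) +
        ∑ j : Fin n, height d p (Fin.last n) j.castSucc * labelIndicator q (d.2 (Fin.last n) j)) -
      (∑ j : Fin n, height d p 0 j.castSucc * labelIndicator q (d.2 0 j) +
        ∑ i : Fin n, height d p i.castSucc (Fin.last n) *
          labelIndicator q (d.1 i (Fin.last n))) := by
  rw [← sum_grid_defect_eq_boundary
    (fun i j => height d p i.castSucc j * labelIndicator q (d.1 i j))
    (fun i j => height d p i j.castSucc * labelIndicator q (d.2 i j))]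
  simp only [horizCrossCount, Finset.natCast_card_filter, Fintype.sum_prod_type,
    ← Finset.sum_sub_distrib, ← hd.labelIndicator_curl hpq]
  refine Finset.sum_congr rfl fun i _ => Finset.sum_congr rfl fun j _ => ?_
  have conserved := hd.map_We_add_map_So (labelIndicator q) i j
  rw [hd.height_south, height_east]
  simp only [We, So, No, Ea] at conserved ⊢
  linear_combination (-height d p i.castSucc j.castSucc) * conserved

lemma IsGPDof.height_west {w : Equiv.Perm (Fin n)} {d : Pipes n} (hd : IsGPDof w d) (p : Fin n)
    (i : Fin (n + 1)) : height d p i 0 = if p.castSucc < i then 1 else 0 := by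
  simp only [height, hd.2.1, labelIndicator, Option.some.injEq, Fin.partialSum_zero, add_zero,
    partialSum_ite_eq]

lemma IsGPDof.height_north {w : Equiv.Perm (Fin n)} {d : Pipes n} (hd : IsGPDof w d) (p : Fin n)
    (j : Fin (n + 1)) : height d p 0 j = if (w p).castSucc < j then 1 else 0 := by
  simp only [height, hd.2.2.2.2, labelIndicator, Option.some.injEq, Equiv.symm_apply_eq,
    Fin.partialSum_zero, zero_add, partialSum_ite_eq]

lemma IsGPDof.horizCrossCount_sub {w : Equiv.Perm (Fin n)} {d : Pipes n} (hd : IsGPDof w d)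
    {p q : Fin n} (hpq : p ≠ q) :
    (horizCrossCount d p q : ℤ) - horizCrossCount d q p =
      (if p < q then 1 else 0) - (if w p < w q then 1 else 0) := by
  rw [hd.1.horizCrossCount_sub_eq_boundary hpq]
  have ⟨_, hwest, heast, hsouth, hnorth⟩ := hd
  simp [labelIndicator, hd.height_west, hd.height_north, hwest, heast, hsouth, hnorth,
    Equiv.symm_apply_eq]

lemma IsGPDof.horizCrossCount_of_lt {w : Equiv.Perm (Fin n)} {d : Pipes n} (hd : IsGPDof w d)
    {p q : Fin n} (hpq : p < q) :
    horizCrossCount d p q = horizCrossCount d q p + if w q < w p then 1 else 0 := by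
  have signed := hd.horizCrossCount_sub hpq.ne
  have hw : w p ≠ w q := w.injective.ne hpq.ne
  split_ifs at signed ⊢ <;> omega

end SignedCrossings

section Crossings

lemma crossesAt_iff_horizCrossesAt {d : Pipes n} {p q i j : Fin n} :
    CrossesAt d p q i j ↔ HorizCrossesAt d p q i j ∨ HorizCrossesAt d q p i j :=
  and_or_left

lemma crossCount_comm (d : Pipes n) (p q : Fin n) : crossCount d p q = crossCount d q p := by
  simp only [crossCount, crossesAt_iff_horizCrossesAt, or_comm]

lemma IsValid.not_crossesAt_self {d : Pipes n} (hd : IsValid d) (p i j : Fin n) :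
    ¬ CrossesAt d p p i j := by
  rintro ⟨-, ⟨hW, hS⟩ | ⟨hW, hS⟩⟩ <;>
    exact Option.some_ne_none p (hW.symm.trans ((hd i j).2 (hW.trans hS.symm)))

lemma crossCount_eq_add_horizCrossCount {d : Pipes n} {p q : Fin n} (hpq : p ≠ q) :
    crossCount d p q = horizCrossCount d p q + horizCrossCount d q p := by
  have disjoint : Disjoint
      (Finset.univ.filter fun ij : Fin n × Fin n => HorizCrossesAt d p q ij.1 ij.2)
      (Finset.univ.filter fun ij : Fin n × Fin n => HorizCrossesAt d q p ij.1 ij.2) :=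
    Finset.disjoint_filter.2 fun _ _ h h' => hpq (Option.some.inj (h.2.1.symm.trans h'.2.1))
  simp only [crossCount, horizCrossCount, crossesAt_iff_horizCrossesAt, Finset.filter_or,
    Finset.card_union_of_disjoint disjoint]

lemma exists_labels_of_tile_eq_cross {d : Pipes n} {i j : Fin n} (h : tile d i j = .cross) :
    ∃ a b, We d i j = some a ∧ So d i j = some b := by
  unfold tile at h
  split at h
  case h_1 a b hW hS => exact ⟨a, b, hW, hS⟩
  case h_4 => nomatch h
  all_goals split_ifs at h

lemma IsValid.existsUnique_lt_crossesAt {d : Pipes n} (hd : IsValid d) {i j : Fin n}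
    (h : tile d i j = .cross) :
    ∃! pq : Fin n × Fin n, pq.1 < pq.2 ∧ CrossesAt d pq.1 pq.2 i j := by
  obtain ⟨a, b, hW, hS⟩ := exists_labels_of_tile_eq_cross h
  have hab : a ≠ b := by
    rintro rfl
    exact hd.not_crossesAt_self a i j ⟨h, Or.inl ⟨hW, hS⟩⟩
  simp only [CrossesAt, h, hW, hS, Option.some.injEq, true_and]
  rcases hab.lt_or_gt with hlt | hlt
  · refine ⟨(a, b), ⟨hlt, Or.inl ⟨rfl, rfl⟩⟩, ?_⟩
    rintro ⟨p, q⟩ ⟨hpq, ⟨rfl, rfl⟩ | ⟨rfl, rfl⟩⟩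
    exacts [rfl, (hpq.not_gt hlt).elim]
  · refine ⟨(b, a), ⟨hlt, Or.inr ⟨rfl, rfl⟩⟩, ?_⟩
    rintro ⟨p, q⟩ ⟨hpq, ⟨rfl, rfl⟩ | ⟨rfl, rfl⟩⟩
    exacts [(hpq.not_gt hlt).elim, rfl]

lemma IsValid.tileCount_cross_eq_sum_crossCount {d : Pipes n} (hd : IsValid d) :
    tileCount d .cross = ∑ pq : Fin n × Fin n with pq.1 < pq.2, crossCount d pq.1 pq.2 := by
  have one_pair (ij : Fin n × Fin n) : (if tile d ij.1 ij.2 = .cross then 1 else 0) =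
      ∑ pq : Fin n × Fin n with pq.1 < pq.2,
        if CrossesAt d pq.1 pq.2 ij.1 ij.2 then 1 else 0 := by
    rw [← Finset.card_filter, Finset.filter_filter]
    split_ifs with h
    · exact ((Fintype.existsUnique_iff_card_one _).1 (hd.existsUnique_lt_crossesAt h)).symm
    · simp [CrossesAt, h]
  simp only [tileCount, crossCount, Finset.card_filter, one_pair]
  exact Finset.sum_comm

/-- The number of crossings at which the pipe of larger label runs West–East. They undo inversions,
whereas the other crossings create them. -/
noncomputable def backCrossCount (d : Pipes n) : ℕ :=
  ∑ pq : Fin n × Fin n with pq.1 < pq.2, horizCrossCount d pq.2 pq.1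

lemma IsGPDof.crossCount_of_lt {w : Equiv.Perm (Fin n)} {d : Pipes n} (hd : IsGPDof w d)
    {p q : Fin n} (hpq : p < q) :
    crossCount d p q = (if w q < w p then 1 else 0) + 2 * horizCrossCount d q p := by
  rw [crossCount_eq_add_horizCrossCount hpq.ne, hd.horizCrossCount_of_lt hpq]
  ring

lemma IsGPDof.tileCount_cross {w : Equiv.Perm (Fin n)} {d : Pipes n} (hd : IsGPDof w d) :
    tileCount d .cross = invCount w + 2 * backCrossCount d := by
  rw [hd.1.tileCount_cross_eq_sum_crossCount, backCrossCount, Finset.mul_sum, invCount,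
    ← Finset.filter_filter, Finset.card_filter, ← Finset.sum_add_distrib]
  exact Finset.sum_congr rfl fun pq hpq => hd.crossCount_of_lt (Finset.mem_filter.1 hpq).2

lemma IsGPDof.noDoubleCross_iff {w : Equiv.Perm (Fin n)} {d : Pipes n} (hd : IsGPDof w d) :
    NoDoubleCross d ↔ backCrossCount d = 0 := by
  have crossCount_le_one_iff {p q : Fin n} (hpq : p < q) :
      crossCount d p q ≤ 1 ↔ horizCrossCount d q p = 0 := by
    rw [hd.crossCount_of_lt hpq]
    split_ifs <;> omega
  simp only [backCrossCount, Finset.sum_eq_zero_iff, Finset.mem_filter_univ, Prod.forall]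
  refine ⟨fun h p q hpq => (crossCount_le_one_iff hpq).1 (h p q), fun h p q => ?_⟩
  rcases lt_trichotomy p q with hpq | rfl | hqp
  · exact (crossCount_le_one_iff hpq).2 (h p q hpq)
  · simp [crossCount, hd.1.not_crossesAt_self]
  · exact crossCount_comm d p q ▸ (crossCount_le_one_iff hqp).2 (h q p hqp)

lemma tileCount_eq_zero_iff {d : Pipes n} {t : Tile} :
    tileCount d t = 0 ↔ ∀ i j, tile d i j ≠ t := by
  simp [tileCount, Finset.filter_eq_empty_iff]

lemma IsGPDof.isBumplessReduced_iff {w : Equiv.Perm (Fin n)} {d : Pipes n} (hd : IsGPDof w d) :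
    IsBumplessReduced d ↔ tileCount d .bump = 0 ∧ backCrossCount d = 0 := by
  rw [IsBumplessReduced, tileCount_eq_zero_iff, hd.noDoubleCross_iff]

end Crossings

section Degree

open MvPolynomial

lemma degreeOf_X_add_of_degreeOf_eq_zero {σ R : Type*} [CommSemiring R] [Nontrivial R] {a : σ}
    {f : MvPolynomial σ R} (hf : degreeOf a f = 0) : degreeOf a (X a + f) = 1 := by
  rw [degreeOf_add_eq_of_degreeOf_lt] <;> simp [hf]

/-- The weight of a tile `t` placed at `(i,j)`. -/
noncomputable def tileWt (t : Tile) (i j : Fin n) : MvPolynomial (Var n) ℤ :=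
  match t with
  | .cross | .horiz | .vert => X Var.A + X (Var.x i) - X (Var.y j)
  | .blank => X Var.B - X (Var.x i) + X (Var.y j)
  | _ => X Var.A + X Var.B

lemma wt_eq_prod_tileWt (d : Pipes n) :
    wt d = ∏ ij : Fin n × Fin n, tileWt (tile d ij.1 ij.2) ij.1 ij.2 := by
  rw [Fintype.prod_prod_type]
  rfl

lemma tileWt_ne_zero (t : Tile) (i j : Fin n) : tileWt t i j ≠ 0 := by
  -- Every tile weight is positive at `A = B = 1`, `x = y = 0`.
  intro h
  have eval_eq := congrArg (eval fun | .A | .B => 1 | _ => 0) h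
  cases t <;> simp [tileWt] at eval_eq

lemma degreeOf_A_tileWt (t : Tile) (i j : Fin n) :
    degreeOf Var.A (tileWt t i j) = if t = .blank then 0 else 1 := by
  have hX {v : Var n} (hv : Var.A ≠ v) : degreeOf Var.A (X v : MvPolynomial (Var n) ℤ) = 0 :=
    degreeOf_X_of_ne hv
  have hxy : degreeOf Var.A (X (Var.x i) - X (Var.y j) : MvPolynomial (Var n) ℤ) = 0 :=
    Nat.le_zero.1 <| (degreeOf_sub_le _ _ _).trans (by simp [hX])
  have hBxy :
      degreeOf Var.A (X Var.B - (X (Var.x i) - X (Var.y j)) : MvPolynomial (Var n) ℤ) = 0 :=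
    Nat.le_zero.1 <| (degreeOf_sub_le _ _ _).trans (by simp [hX, hxy])
  cases t <;>
    simp [tileWt, add_sub_assoc, sub_add, degreeOf_X_add_of_degreeOf_eq_zero, hX, hxy, hBxy]

lemma degreeOf_A_wt_add_tileCount_blank (d : Pipes n) :
    degreeOf Var.A (wt d) + tileCount d .blank = n ^ 2 := by
  rw [wt_eq_prod_tileWt, degreeOf_prod_eq _ _ fun _ _ => tileWt_ne_zero _ _ _, tileCount,
    Finset.card_filter, ← Finset.sum_add_distrib]
  have one_each (ij : Fin n × Fin n) :
      degreeOf Var.A (tileWt (tile d ij.1 ij.2) ij.1 ij.2) +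
        (if tile d ij.1 ij.2 = .blank then 1 else 0) = 1 := by
    rw [degreeOf_A_tileWt]
    split_ifs <;> rfl
  simp [one_each, sq]

end Degree

theorem statement2 {n : ℕ} (hn : 1 ≤ n) (w : Equiv.Perm (Fin n)) (d : Pipes n)
    (hd : IsGPDof w d) :
    MvPolynomial.degreeOf Var.A (wt d) + tileCount d .blank = n ^ 2 ∧
    MvPolynomial.degreeOf Var.A (wt d) + invCount w ≤ n ^ 2 ∧
    (MvPolynomial.degreeOf Var.A (wt d) + invCount w = n ^ 2 ↔ IsBumplessReduced d) := by
  have hdegree := degreeOf_A_wt_add_tileCount_blank d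
  have hblank := hd.tileCount_blank
  have hcross := hd.tileCount_cross
  refine ⟨hdegree, by omega, ?_⟩
  rw [hd.isBumplessReduced_iff]
  omega

end GPDpaper
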